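/- Let m > 2 and n > 2 be odd integers and let p, q ≥ 2 be relatively prime integers such that either both p and q are odd, or p is odd and q is even with n = 2k−1 for even k. Then for all lens spaces L^m_p and L^n_q (i.e., for every admissible choice of parameters), cat(L^m_p × L^n_q) ≤ m + n − 2. -/

import Mathlib

open scoped Topology

/-- The Lusternik–Schnirelmann category of a space (normalized so that contractible spaces
have category 0): the least `k` such that `X` admits an open cover by `k+1` sets, each of
which has nullhomotopic inclusion into `X` (i.e. is contractible in `X`). -/
noncomputable def lsCat (X : Type*) [TopologicalSpace X] : ℕ :=
  sInf {k : ℕ | ∃ U : Fin (k + 1) → Set X,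
    (∀ i, IsOpen (U i)) ∧ (⋃ i, U i) = Set.univ ∧
    ∀ i, ContinuousMap.Nullhomotopic
      (⟨Subtype.val, continuous_subtype_val⟩ : C(U i, X))}

/-- The orbit relation on the unit sphere of `ℂ^k` defining the lens space
`L^{2k-1}_p(ℓ₁,…,ℓ_k)`: a fixed generator of `ℤ/p` acts coordinatewise by
`z_j ↦ exp(2πiℓ_j/p) z_j`, and `m` ranges over the powers of this generator. -/
def lensRel (p k : ℕ) (ℓ : Fin k → ℤ) :
    Metric.sphere (0 : EuclideanSpace ℂ (Fin k)) 1 →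
      Metric.sphere (0 : EuclideanSpace ℂ (Fin k)) 1 → Prop :=
  fun x y => ∃ m : ℤ, ∀ j : Fin k,
    (y.1 j) = Complex.exp (2 * Real.pi * Complex.I * m * ℓ j / p) * (x.1 j)

/-- The lens space `L^{2k-1}_p(ℓ₁,…,ℓ_k)`: the orbit space of the free linear action of `ℤ/p`
on the unit sphere `S^{2k-1} ⊆ ℂ^k` determined by the parameters `ℓ`, with the quotient
topology. -/
noncomputable def LensSpace (p k : ℕ) (ℓ : Fin k → ℤ) : Type :=
  Quot (lensRel p k ℓ)

noncomputable instance (p k : ℕ) (ℓ : Fin k → ℤ) : TopologicalSpace (LensSpace p k ℓ) :=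
  inferInstanceAs (TopologicalSpace (Quot (lensRel p k ℓ)))

namespace LensProof

open ContinuousMap

/-- The unit sphere of `ℂ^k`. -/
abbrev Sph (k : ℕ) := Metric.sphere (0 : EuclideanSpace ℂ (Fin k)) 1

/-- The open sector of half-angle `π / n` about the positive real axis. -/
def sector (n : ℕ) : Set ℂ := {c | c ∈ Complex.slitPlane ∧ |c.arg| < Real.pi / n}

lemma sector_open (n : ℕ) : IsOpen (sector n) := by
  have h : ContinuousOn (fun c : ℂ => |c.arg|) Complex.slitPlane := fun c hc =>
    ((Complex.continuousAt_arg hc).abs).continuousWithinAt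
  exact h.isOpen_inter_preimage Complex.isOpen_slitPlane isOpen_Iio

lemma sector_ne_zero {n : ℕ} {c : ℂ} (h : c ∈ sector n) : c ≠ 0 :=
  Complex.slitPlane_ne_zero h.1

lemma sector_inj {n : ℕ} (hn : n ≠ 0) {c η : ℂ} (hc : c ∈ sector n) (hηc : η * c ∈ sector n)
    (hη : η ^ n = 1) : η = 1 := by
  have h1 := Complex.pow_cpow_nat_inv hn (abs_lt.1 hc.2).1 (abs_lt.1 hc.2).2.le
  have h2 := Complex.pow_cpow_nat_inv hn (abs_lt.1 hηc.2).1 (abs_lt.1 hηc.2).2.le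
  rw [mul_pow, hη, one_mul, h1] at h2
  have := sector_ne_zero hc
  exact mul_right_cancel₀ this (by rw [one_mul]; exact h2.symm)

lemma sector_cover {n : ℕ} (hn : 2 ≤ n) {c : ℂ} (hc : c ^ n ∈ Complex.slitPlane) :
    ∃ η : ℂ, η ^ n = 1 ∧ η * c ∈ sector n := by
  have hn0 : n ≠ 0 := by omega
  have hcn : c ^ n ≠ 0 := Complex.slitPlane_ne_zero hc
  have hc0 : c ≠ 0 := fun h => hcn (by rw [h, zero_pow hn0])
  have hnR : (2 : ℝ) ≤ n := by exact_mod_cast hn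
  have hnC : (n : ℂ) ≠ 0 := by exact_mod_cast hn0
  set x : ℂ := Complex.log (c ^ n) / n with hx
  have him : x.im = (c ^ n).arg / n := by
    rw [hx, Complex.div_natCast_im, Complex.log_im]
  have harg : |(c ^ n).arg| < Real.pi := by
    rw [Complex.mem_slitPlane_iff_arg] at hc
    rw [abs_lt]
    exact ⟨Complex.neg_pi_lt_arg _, lt_of_le_of_ne (Complex.arg_le_pi _) hc.1⟩
  have him2 : |x.im| < Real.pi / n := by
    rw [him, abs_div, Nat.abs_cast]
    exact div_lt_div_of_pos_right harg (by linarith)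
  have hle : Real.pi / n ≤ Real.pi / 2 :=
    div_le_div_of_nonneg_left Real.pi_pos.le (by norm_num) hnR
  have hpi := Real.pi_pos
  have him3 := abs_lt.1 him2
  have hlog : Complex.log (Complex.exp x) = x :=
    Complex.log_exp (by linarith) (by linarith)
  have hargx : (Complex.exp x).arg = x.im := by rw [← Complex.log_im, hlog]
  have hpow : Complex.exp x ^ n = c ^ n := by
    rw [← Complex.exp_nat_mul, hx, mul_div_cancel₀ _ hnC, Complex.exp_log hcn]
  refine ⟨Complex.exp x / c, ?_, ?_⟩
  · rw [div_pow, hpow, div_self hcn]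
  · rw [div_mul_cancel₀ _ hc0]
    refine ⟨?_, by rw [hargx]; exact him2⟩
    rw [Complex.mem_slitPlane_iff_arg]
    refine ⟨?_, Complex.exp_ne_zero _⟩
    rw [hargx]
    intro h
    linarith

/-- Straight-line homotopies in the complement of the origin. -/
lemma line_homotopic {V E : Type*} [TopologicalSpace V] [NormedAddCommGroup E] [NormedSpace ℝ E]
    (f g : C(V, {x : E // x ≠ 0}))
    (h : ∀ v, ∀ t : ℝ, 0 ≤ t → t ≤ 1 → (1 - t) • (f v).1 + t • (g v).1 ≠ 0) :
    Homotopic f g := by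
  refine ⟨⟨⟨fun tv => ⟨(1 - (tv.1 : ℝ)) • (f tv.2).1 + (tv.1 : ℝ) • (g tv.2).1,
    h tv.2 _ tv.1.2.1 tv.1.2.2⟩, ?_⟩, ?_, ?_⟩⟩
  · fun_prop
  · intro v; apply Subtype.ext; simp
  · intro v; apply Subtype.ext; simp

/-- Radial projection to the sphere. -/
noncomputable def nrm (k : ℕ) : C({x : EuclideanSpace ℂ (Fin k) // x ≠ 0}, Sph k) where
  toFun x := ⟨(‖x.1‖⁻¹ : ℝ) • x.1, by
    have := norm_ne_zero_iff.2 x.2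
    simp [norm_smul, this]⟩
  continuous_toFun := by
    refine Continuous.subtype_mk ?_ _
    exact (Continuous.inv₀ (by fun_prop) (fun x => norm_ne_zero_iff.2 x.2)).smul
      continuous_subtype_val

/-- The inclusion of the sphere in the punctured space. -/
def inc (k : ℕ) : C(Sph k, {x : EuclideanSpace ℂ (Fin k) // x ≠ 0}) where
  toFun x := ⟨x.1, fun h => by have := x.2; simp [h] at this⟩
  continuous_toFun := by fun_prop

lemma nrm_inc (k : ℕ) (x : Sph k) : nrm k (inc k x) = x := by
  apply Subtype.ext
  have : ‖x.1‖ = 1 := by simpa using x.2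
  simp [nrm, inc, this]

lemma sph_pathConnected {k : ℕ} (hk : 2 ≤ k) : PathConnectedSpace (Sph k) := by
  rw [← isPathConnected_iff_pathConnectedSpace]
  apply isPathConnected_sphere _ _ zero_le_one
  have h : Module.finrank ℝ (EuclideanSpace ℂ (Fin k)) = 2 * k := by
    rw [← Module.finrank_mul_finrank ℝ ℂ]
    simp
  have : (1 : Cardinal) < Module.finrank ℝ (EuclideanSpace ℂ (Fin k)) := by
    rw [h]; exact_mod_cast (by omega : 1 < 2 * k)
  rwa [Module.finrank_eq_rank] at this

/-- A map to a sphere is nullhomotopic as soon as, after a shear, one coordinate never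
vanishes. -/
lemma null_sph {V : Type*} [TopologicalSpace V] {k : ℕ} (hk : 2 ≤ k) (f : C(V, Sph k))
    (i i' : Fin k)
    (hii : i ≠ i') (g : V → ℂ) (hg : Continuous g) (hD : ∀ v, (f v).1 i - g v ≠ 0)
    (h0 : ∀ v, (f v).1 i' = 0 → g v = 0) (c : Sph k) :
    Homotopic f (ContinuousMap.const V c) := by
  have hf0 : ∀ v, (f v).1 ≠ 0 := fun v => (inc k (f v)).2
  have hfc : Continuous fun v => (f v).1 := by fun_prop
  have hfi : ∀ j, Continuous fun v => (f v).1 j := fun j => by fun_prop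
  have hs : ∀ j, Continuous fun x : ℂ => EuclideanSpace.single (𝕜 := ℂ) j x := fun j =>
    (LinearIsometry.continuous
      (⟨{ toFun := fun x : ℂ => (EuclideanSpace.single j x : EuclideanSpace ℂ (Fin k)),
          map_add' := fun x y => by ext l; simp [Pi.single_apply]; split_ifs <;> simp
          map_smul' := fun x y => by ext l; simp },
        fun x => by simp⟩ : ℂ →ₗᵢ[ℂ] EuclideanSpace ℂ (Fin k)))
  have ne1 : ∀ v, ∀ t : ℝ, (f v).1 - t • EuclideanSpace.single i (g v) ≠ 0 := by
    intro v t h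
    have h1 : (f v).1 i' = 0 := by
      have := congrArg (fun x : EuclideanSpace ℂ (Fin k) => x i') h
      simpa [hii, Pi.single_apply, hii.symm] using this
    rw [h0 v h1] at h
    apply hf0 v
    have hz : (EuclideanSpace.single i (0 : ℂ) : EuclideanSpace ℂ (Fin k)) = 0 := by
      ext l; simp
    rw [hz, smul_zero, sub_zero] at h
    exact h
  let F1 : C(V, {x : EuclideanSpace ℂ (Fin k) // x ≠ 0}) :=
    ⟨fun v => ⟨(f v).1 - EuclideanSpace.single i (g v), by simpa using ne1 v 1⟩,
      by refine Continuous.subtype_mk ?_ _; exact hfc.sub ((hs i).comp hg)⟩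
  let F2 : C(V, {x : EuclideanSpace ℂ (Fin k) // x ≠ 0}) :=
    ⟨fun v => ⟨EuclideanSpace.single i ((f v).1 i - g v), by simpa using hD v⟩,
      by refine Continuous.subtype_mk ?_ _; exact (hs i).comp ((hfi i).sub hg)⟩
  let e : {x : EuclideanSpace ℂ (Fin k) // x ≠ 0} := ⟨EuclideanSpace.single i' 1, by simp⟩
  have H1 : Homotopic ((inc k).comp f) F1 := by
    apply line_homotopic
    intro v t _ _ h
    apply ne1 v t
    rw [← h]
    simp only [F1, inc, ContinuousMap.comp_apply, ContinuousMap.coe_mk]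
    module
  have H2 : Homotopic F1 F2 := by
    apply line_homotopic
    intro v t _ _ h
    apply hD v
    have := congrArg (fun x : EuclideanSpace ℂ (Fin k) => x i) h
    simp [F1, F2] at this
    rw [← this]; ring
  have H3 : Homotopic F2 (ContinuousMap.const V e) := by
    apply line_homotopic
    intro v t _ _ h
    have h1 := congrArg (fun x : EuclideanSpace ℂ (Fin k) => x i') h
    have h2 := congrArg (fun x : EuclideanSpace ℂ (Fin k) => x i) h
    simp [F2, e, hii, hii.symm] at h1 h2
    subst h1
    simp at h2
    exact hD v h2
  have H := (H1.trans H2).trans H3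
  have H' : Homotopic ((nrm k).comp ((inc k).comp f)) ((nrm k).comp (ContinuousMap.const V e)) :=
    .comp (.refl _) H
  have e1 : (nrm k).comp ((inc k).comp f) = f := by
    ext1 v; exact nrm_inc k (f v)
  rw [e1] at H'
  refine H'.trans ?_
  obtain ⟨γ⟩ := (sph_pathConnected hk).joined (nrm k e) c
  exact ⟨⟨⟨fun tv => γ tv.1, by fun_prop⟩, fun v => by simp, fun v => by simp⟩⟩

/-- Gluing nullhomotopies over disjoint open sets. -/
lemma null_glue {Y Z J : Type*} [TopologicalSpace Y] [TopologicalSpace Z] (f : C(Y, Z)) (c : Z)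
    (V : J → Set Y) (hV : ∀ j, IsOpen (V j)) (hd : ∀ i j y, y ∈ V i → y ∈ V j → i = j)
    (hn : ∀ j, Homotopic (f.restrict (V j)) (ContinuousMap.const _ c)) :
    Homotopic (f.restrict (⋃ j, V j)) (ContinuousMap.const _ c) := by
  have H := fun j => (hn j).some
  have hmem : ∀ y : (⋃ j, V j : Set Y), ∃ j, y.1 ∈ V j := fun y => Set.mem_iUnion.1 y.2
  choose idx hidx using hmem
  have key : ∀ (t : unitInterval) (y : (⋃ j, V j : Set Y)) (j : J) (h : y.1 ∈ V j),
      H (idx y) (t, ⟨y.1, hidx y⟩) = H j (t, ⟨y.1, h⟩) := by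
    intro t y j h
    obtain rfl := hd _ _ _ (hidx y) h
    rfl
  refine ⟨⟨⟨fun ty => H (idx ty.2) (ty.1, ⟨ty.2.1, hidx ty.2⟩), ?_⟩, ?_, ?_⟩⟩
  · refine continuous_of_cover_nhds (s := fun j => {ty | ty.2.1 ∈ V j}) ?_ ?_
    · intro ty
      refine ⟨idx ty.2, IsOpen.mem_nhds ?_ (hidx ty.2)⟩
      exact (hV _).preimage (by fun_prop)
    · intro j
      rw [continuousOn_iff_continuous_domRestrict]
      have : Continuous fun ty : {ty : unitInterval × (⋃ j, V j : Set Y) | ty.2.1 ∈ V j} =>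
          H j (ty.1.1, ⟨ty.1.2.1, ty.2⟩) := by fun_prop
      convert this using 2 with ty
      exact key _ _ _ ty.2
  · intro y; simp
  · intro y; simp

/-- Image of an open set under an open map injective on it. -/
lemma null_image {Y X : Type*} [TopologicalSpace Y] [TopologicalSpace X] (π : C(Y, X))
    (hπ : IsOpenMap π) (V : Set Y) (hV : IsOpen V) (hinj : Set.InjOn π V)
    (hn : ((ContinuousMap.id Y).restrict V).Nullhomotopic) :
    IsOpen (π '' V) ∧ ContinuousMap.Nullhomotopic
      (⟨Subtype.val, continuous_subtype_val⟩ : C((π '' V : Set X), X)) := by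
  refine ⟨hπ _ hV, ?_⟩
  have hemb : Topology.IsOpenEmbedding (V.domRestrict π) :=
    .of_continuous_injective_isOpenMap (by fun_prop) (Set.injOn_iff_injective.1 hinj)
      (hπ.domRestrict hV)
  have hr : Set.range (V.domRestrict π) = π '' V := Set.range_domRestrict _ _
  rw [← hr]
  let e := hemb.toIsEmbedding.toHomeomorph
  have h2 := (hn.comp_right π).comp_left (⟨e.symm, e.symm.continuous⟩ : C(_, V))
  convert h2
  ext x
  obtain ⟨y, rfl⟩ := e.surjective x
  simp [e]

lemma lsCat_le {X : Type*} [TopologicalSpace X] {ι : Type*} [Fintype ι] (k : ℕ)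
    (hk : Fintype.card ι = k + 1) (U : ι → Set X) (hU : ∀ i, IsOpen (U i))
    (hc : ∀ x, ∃ i, x ∈ U i)
    (hn : ∀ i, ContinuousMap.Nullhomotopic
      (⟨Subtype.val, continuous_subtype_val⟩ : C(U i, X))) : lsCat X ≤ k := by
  let e := Fintype.equivFinOfCardEq hk
  refine Nat.sInf_le ⟨fun i => U (e.symm i), fun i => hU _, ?_, fun i => hn _⟩
  rw [Set.iUnion_eq_univ_iff]
  intro x
  obtain ⟨i, hi⟩ := hc x
  exact ⟨e i, by simpa using hi⟩

/-- Normal form of the lens relation: weights normalized so that the first one is `1`. -/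
lemma lens_data (p k : ℕ) (hp : 2 ≤ p) (ℓ : Fin k → ℤ) (hℓ : ∀ j, IsCoprime (ℓ j) (p : ℤ))
    (i₀ : Fin k) : ∃ e r : Fin k → ℕ, (∀ j, r j ≠ 0) ∧ r i₀ = 1 ∧
      (∀ s : ℂ, s ^ p = 1 → ∀ j, (s ^ (e j)) ^ (r j) = s) ∧
      ∀ x y, lensRel p k ℓ x y ↔ ∃ s : ℂ, s ^ p = 1 ∧ ∀ j, y.1 j = s ^ (e j) * x.1 j := by
  have : NeZero p := ⟨by omega⟩
  have : Fact (1 < p) := ⟨by omega⟩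
  have hpC : (p : ℂ) ≠ 0 := by exact_mod_cast NeZero.ne p
  have hunit : ∀ j, IsUnit ((ℓ j : ℤ) : ZMod p) := fun j => by
    obtain ⟨x, y, hxy⟩ := hℓ j
    have h := congrArg (fun z : ℤ => (z : ZMod p)) hxy
    push_cast at h
    rw [ZMod.natCast_self, mul_zero, add_zero] at h
    exact IsUnit.of_mul_eq_one _ (by rw [mul_comm]; exact h)
  choose u hu using hunit
  -- powers of roots of unity
  have hpow : ∀ s : ℂ, s ^ p = 1 → ∀ a b : ℕ, (a : ZMod p) = b → s ^ a = s ^ b := by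
    intro s hs a b hab
    rw [ZMod.natCast_eq_natCast_iff] at hab
    have : ∀ c, s ^ c = s ^ (c % p) := fun c => by
      conv_lhs => rw [← Nat.mod_add_div c p, pow_add, pow_mul, hs, one_pow, mul_one]
    rw [this a, this b, hab]
  have hexp : ∀ a b : ℤ, (a : ZMod p) = b →
      Complex.exp (2 * Real.pi * Complex.I * a / p) =
        Complex.exp (2 * Real.pi * Complex.I * b / p) := by
    intro a b hab
    rw [ZMod.intCast_eq_intCast_iff_dvd_sub] at hab
    obtain ⟨c, hc⟩ := hab
    rw [Complex.exp_eq_exp_iff_exists_int]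
    refine ⟨-c, ?_⟩
    have : (b : ℂ) - a = p * c := by exact_mod_cast hc
    have hb : (a : ℂ) = b - p * c := by rw [← this]; ring
    rw [hb]
    push_cast
    field_simp
    ring
  refine ⟨fun j => ((u j * (u i₀)⁻¹ : (ZMod p)ˣ) : ZMod p).val,
    fun j => ((u i₀ * (u j)⁻¹ : (ZMod p)ˣ) : ZMod p).val, ?_, ?_, ?_, ?_⟩
  · intro j h
    rw [ZMod.val_eq_zero] at h
    exact Units.ne_zero _ h
  · simp [ZMod.val_one]
  · intro s hs j
    rw [← pow_mul]
    have := hpow s hs (((u j * (u i₀)⁻¹ : (ZMod p)ˣ) : ZMod p).val *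
      ((u i₀ * (u j)⁻¹ : (ZMod p)ˣ) : ZMod p).val) 1 (by
        rw [Nat.cast_mul, ZMod.natCast_zmod_val, ZMod.natCast_zmod_val, ← Units.val_mul]
        have : u j * (u i₀)⁻¹ * (u i₀ * (u j)⁻¹) = 1 := by group
        rw [this]; simp)
    rw [this, pow_one]
  · intro x y
    constructor
    · rintro ⟨m, hm⟩
      refine ⟨Complex.exp (2 * Real.pi * Complex.I * ((m * ℓ i₀ : ℤ) : ℂ) / p), ?_, ?_⟩
      · rw [← Complex.exp_nat_mul, Complex.exp_eq_one_iff]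
        refine ⟨m * ℓ i₀, ?_⟩
        field_simp
      · intro j
        rw [hm j, ← Complex.exp_nat_mul]
        congr 1
        have := hexp (m * ℓ j) (m * ℓ i₀ * (((u j * (u i₀)⁻¹ : (ZMod p)ˣ) : ZMod p).val : ℤ)) (by
          push_cast
          rw [ZMod.natCast_zmod_val, ← hu, ← hu]
          push_cast
          have : (u i₀ : ZMod p) * ((u i₀)⁻¹ : (ZMod p)ˣ) = 1 := by simp
          linear_combination (-(m : ZMod p) * u j) * this)
        convert this using 2
        · push_cast; ring
        · push_cast; ring
    · rintro ⟨s, hs, h⟩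
      have hs0 : s ≠ 0 := fun h => by rw [h, zero_pow (NeZero.ne p)] at hs; simp at hs
      obtain ⟨n, -, hn⟩ := (Complex.mem_rootsOfUnity p (Units.mk0 s hs0)).1 (by
        rw [mem_rootsOfUnity']; simpa using hs)
      refine ⟨n * (((u i₀)⁻¹ : (ZMod p)ˣ) : ZMod p).val, fun j => ?_⟩
      rw [h j]
      congr 1
      rw [Units.val_mk0] at hn
      rw [← hn, ← Complex.exp_nat_mul]
      have := hexp (n * (((u j * (u i₀)⁻¹ : (ZMod p)ˣ) : ZMod p).val : ℤ))
        (n * (((u i₀)⁻¹ : (ZMod p)ˣ) : ZMod p).val * ℓ j) (by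
          push_cast
          rw [ZMod.natCast_zmod_val, ZMod.natCast_zmod_val, ← hu]
          push_cast
          ring)
      convert this using 2
      · push_cast; ring
      · push_cast; ring

/-- Rotation of the sphere. -/
noncomputable def rot {k : ℕ} (e : Fin k → ℕ) (s : ℂ) (hs : ‖s‖ = 1) : C(Sph k, Sph k) where
  toFun x := ⟨WithLp.toLp 2 fun j => s ^ (e j) * x.1 j, by
    have h : ‖x.1‖ = 1 := by simpa using x.2
    rw [mem_sphere_zero_iff_norm, EuclideanSpace.norm_eq] at *
    simpa [hs] using h⟩
  continuous_toFun := by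
    refine Continuous.subtype_mk ?_ _
    fun_prop

lemma norm_one_of_pow {s : ℂ} {p : ℕ} (hp : 2 ≤ p) (hs : s ^ p = 1) : ‖s‖ = 1 :=
  Complex.norm_eq_one_of_pow_eq_one hs (by omega)

lemma mk_eq_iff {p k : ℕ} (hp : 2 ≤ p) {ℓ : Fin k → ℤ} {e : Fin k → ℕ}
    (he : ∀ x y, lensRel p k ℓ x y ↔ ∃ s : ℂ, s ^ p = 1 ∧ ∀ j, y.1 j = s ^ (e j) * x.1 j)
    (x y : Sph k) : Quot.mk (lensRel p k ℓ) x = Quot.mk (lensRel p k ℓ) y ↔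
      ∃ s : ℂ, s ^ p = 1 ∧ ∀ j, y.1 j = s ^ (e j) * x.1 j := by
  have heq : Equivalence (lensRel p k ℓ) := by
    refine ⟨fun x => ?_, fun {x y} h => ?_, fun {x y z} h h' => ?_⟩
    · rw [he]; exact ⟨1, by simp, by simp⟩
    · rw [he] at *
      obtain ⟨s, hs, h⟩ := h
      have hs0 : s ≠ 0 := fun h => by rw [h, zero_pow (by omega)] at hs; simp at hs
      refine ⟨s⁻¹, by rw [inv_pow, hs, inv_one], fun j => ?_⟩
      rw [h j, inv_pow, inv_mul_cancel_left₀ (pow_ne_zero _ hs0)]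
    · rw [he] at *
      obtain ⟨s, hs, h⟩ := h
      obtain ⟨s', hs', h'⟩ := h'
      refine ⟨s' * s, by rw [mul_pow, hs, hs', one_mul], fun j => ?_⟩
      rw [h' j, h j, mul_pow, mul_assoc]
  rw [Quot.eq, heq.eqvGen_iff, he]

/-- The quotient map. -/
def mk (p k : ℕ) (ℓ : Fin k → ℤ) : C(Sph k, LensSpace p k ℓ) :=
  ⟨Quot.mk _, continuous_quot_mk⟩

lemma mk_open {p k : ℕ} (hp : 2 ≤ p) {ℓ : Fin k → ℤ} {e : Fin k → ℕ}
    (he : ∀ x y, lensRel p k ℓ x y ↔ ∃ s : ℂ, s ^ p = 1 ∧ ∀ j, y.1 j = s ^ (e j) * x.1 j) :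
    IsOpenMap (mk p k ℓ) := by
  intro O hO
  have hq : Topology.IsQuotientMap (mk p k ℓ) := isQuotientMap_quot_mk
  rw [← hq.isOpen_preimage]
  have : mk p k ℓ ⁻¹' (mk p k ℓ '' O) =
      ⋃ s : {s : ℂ // s ^ p = 1}, rot e s.1 (norm_one_of_pow hp s.2) ⁻¹' O := by
    ext x
    simp only [Set.mem_preimage, Set.mem_image, Set.mem_iUnion]
    constructor
    · rintro ⟨y, hy, hxy⟩
      obtain ⟨s, hs, h⟩ := (mk_eq_iff hp he x y).1 hxy.symm
      refine ⟨⟨s, hs⟩, ?_⟩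
      convert hy
      apply Subtype.ext
      ext j
      simp [rot, h j]
    · rintro ⟨s, h⟩
      exact ⟨_, h, ((mk_eq_iff hp he _ _).2 ⟨s.1, s.2, fun j => by simp [rot]⟩).symm⟩
  rw [this]
  exact isOpen_iUnion fun s => hO.preimage (rot e s.1 _).continuous

/-- The coordinate functions `A_i` on one factor. -/
def co {k : ℕ} (q : ℕ) (r : Fin k → ℕ) (i₀ iL : Fin k) (τ : ℂ) (x : Sph k) (i : Fin k) : ℂ :=
  if i = i₀ then x.1 i₀ ^ q - (x.1 iL ^ r iL * τ) ^ q else (x.1 i ^ r i) ^ q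

lemma co_cont {V : Type*} [TopologicalSpace V] {k : ℕ} (q : ℕ) (r : Fin k → ℕ) (i₀ iL i : Fin k)
    (τ : V → ℂ) (hτ : Continuous τ) (f : V → Sph k) (hf : Continuous f) :
    Continuous fun v => co q r i₀ iL (τ v) (f v) i := by
  unfold co
  split_ifs <;> fun_prop

lemma co_rot {k : ℕ} {q : ℕ} {r e : Fin k → ℕ} {i₀ iL : Fin k} (hr : r i₀ = 1)
    {s : ℂ} (hs : ∀ j, (s ^ (e j)) ^ (r j) = s) {τ τ' : ℂ} (hτ : τ' ^ q = τ ^ q) {x x' : Sph k}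
    (hx : ∀ j, x'.1 j = s ^ (e j) * x.1 j) (i : Fin k) :
    co q r i₀ iL τ' x' i = s ^ q * co q r i₀ iL τ x i := by
  have h0 : s ^ (e i₀) = s := by have := hs i₀; rwa [hr, pow_one] at this
  unfold co
  split_ifs
  · rw [hx, hx, h0]
    simp only [mul_pow, hτ, hs]
    ring
  · rw [hx, mul_pow, hs, mul_pow]

lemma co_exists {k : ℕ} {q : ℕ} (hq : q ≠ 0) {r : Fin k → ℕ} (hr : ∀ j, r j ≠ 0)
    {i₀ iL : Fin k} (hne : i₀ ≠ iL) (τ : ℂ) (x : Sph k) : ∃ i, co q r i₀ iL τ x i ≠ 0 := by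
  by_contra! h
  have h1 : ∀ i, i ≠ i₀ → x.1 i = 0 := fun i hi => by
    have := h i
    rw [co, if_neg hi] at this
    exact pow_eq_zero_iff (hr i) |>.1 (pow_eq_zero_iff hq |>.1 this)
  have h2 : x.1 i₀ = 0 := by
    have := h i₀
    rw [co, if_pos rfl, h1 iL hne.symm, zero_pow (hr iL), zero_mul, zero_pow hq, sub_zero] at this
    exact pow_eq_zero_iff hq |>.1 this
  apply (inc k x).2
  ext i
  by_cases hi : i = i₀
  · subst hi; exact h2
  · exact h1 i hi

lemma null_co {V : Type*} [TopologicalSpace V] {k : ℕ} (hk : 2 ≤ k) {q : ℕ} (hq : q ≠ 0)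
    {r : Fin k → ℕ} (hr : ∀ j, r j ≠ 0)
    {i₀ iL : Fin k} (hne : i₀ ≠ iL) (f : C(V, Sph k)) (τ : V → ℂ) (hτ : Continuous τ) (i : Fin k)
    (h : ∀ v, co q r i₀ iL (τ v) (f v) i ≠ 0) (c : Sph k) :
    Homotopic f (ContinuousMap.const V c) := by
  by_cases hi : i = i₀
  · subst hi
    refine null_sph hk f i iL hne (fun v => (f v).1 iL ^ r iL * τ v) (by fun_prop) ?_ ?_ c
    · intro v hv
      apply h v
      rw [co, if_pos rfl, sub_eq_zero.1 hv, sub_self]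
    · intro v hv
      simp [hv, hr]
  · refine null_sph hk f i i₀ hi (fun _ => 0) continuous_const ?_ (fun _ _ => rfl) c
    intro v hv
    apply h v
    rw [sub_zero] at hv
    rw [co, if_neg hi, hv, zero_pow (hr i), zero_pow hq]

lemma chi_inj {p q : ℕ} (hpq : Nat.Coprime p q) {s t : ℂ} (hs : s ^ p = 1) (ht : t ^ q = 1)
    (h : s ^ q * t ^ p = 1) : s = 1 ∧ t = 1 := by
  have aux : ∀ (p q : ℕ), Nat.Coprime p q → ∀ s t : ℂ, s ^ p = 1 → t ^ q = 1 →
      s ^ q * t ^ p = 1 → s = 1 := by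
    intro p q hpq s t hs ht h
    have h1 : s ^ (q * q) = 1 := by
      have h2 : (s ^ q * t ^ p) ^ q = 1 := by rw [h, one_pow]
      rw [mul_pow, ← pow_mul, ← pow_mul t, mul_comm p q, pow_mul t, ht, one_pow, mul_one] at h2
      exact h2
    have hc : Nat.Coprime p (q * q) := hpq.mul_right hpq
    rw [← orderOf_eq_one_iff]
    exact Nat.eq_one_of_dvd_coprimes hc (orderOf_dvd_of_pow_eq_one hs)
      (orderOf_dvd_of_pow_eq_one h1)
  exact ⟨aux p q hpq s t hs ht h, aux q p hpq.symm t s ht hs (by rw [mul_comm]; exact h)⟩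

lemma chi_surj {p q : ℕ} (hp : 2 ≤ p) (hq : 2 ≤ q) (hpq : Nat.Coprime p q) {η : ℂ}
    (hη : η ^ (p * q) = 1) : ∃ s t : ℂ, s ^ p = 1 ∧ t ^ q = 1 ∧ s ^ q * t ^ p = η := by
  have h0 : η ≠ 0 := fun h => by
    rw [h, zero_pow (by positivity)] at hη
    simp at hη
  have hz : ∀ c : ℤ, η ^ ((p * q : ℤ) * c) = 1 := fun c => by
    rw [zpow_mul, ← Nat.cast_mul, zpow_natCast, hη, one_zpow]
  have hc : IsCoprime (p : ℤ) (q : ℤ) := Nat.isCoprime_iff_coprime.2 hpq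
  obtain ⟨x, y, hxy⟩ := (hc.pow : IsCoprime ((p : ℤ) ^ 2) ((q : ℤ) ^ 2))
  refine ⟨η ^ (q * y : ℤ), η ^ (p * x : ℤ), ?_, ?_, ?_⟩
  · rw [← zpow_natCast, ← zpow_mul, ← hz y]; congr 1; ring
  · rw [← zpow_natCast, ← zpow_mul, ← hz x]; congr 1; ring
  · rw [← zpow_natCast, ← zpow_natCast, ← zpow_mul, ← zpow_mul, ← zpow_add₀ h0]
    conv_rhs => rw [← zpow_one η, ← hxy]
    congr 1; ring

lemma null_prod {V Y Z : Type*} [TopologicalSpace V] [TopologicalSpace Y] [TopologicalSpace Z]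
    (f : C(V, Y × Z)) (c : Y) (d : Z)
    (h1 : Homotopic (ContinuousMap.fst.comp f) (ContinuousMap.const V c))
    (h2 : Homotopic (ContinuousMap.snd.comp f) (ContinuousMap.const V d)) :
    Homotopic f (ContinuousMap.const V (c, d)) := by
  obtain ⟨H1⟩ := h1
  obtain ⟨H2⟩ := h2
  exact ⟨Homotopy.prod H1 H2⟩

lemma null_none {a b : ℕ} (ha : 2 ≤ a) (hb : 2 ≤ b) {i₀ iL : Fin a} {j₀ jL : Fin b}
    (hi : i₀ ≠ iL) (hj : j₀ ≠ jL) (V : Set (Sph a × Sph b))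
    (h1 : ∀ v ∈ V, v.1.1 iL ≠ 0) (h2 : ∀ v ∈ V, v.2.1 jL ≠ 0) (c₁ : Sph a) (c₂ : Sph b) :
    Homotopic ((ContinuousMap.id (Sph a × Sph b)).restrict V) (ContinuousMap.const V (c₁, c₂)) := by
  refine null_prod _ _ _ ?_ ?_
  · refine null_sph ha _ iL i₀ hi.symm (fun _ => 0) continuous_const ?_ (fun _ _ => rfl) _
    intro v
    rw [sub_zero]
    exact h1 v.1 v.2
  · refine null_sph hb _ jL j₀ hj.symm (fun _ => 0) continuous_const ?_ (fun _ _ => rfl) _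
    intro v
    rw [sub_zero]
    exact h2 v.1 v.2

lemma null_some {a b : ℕ} (ha : 2 ≤ a) (hb : 2 ≤ b) {p q : ℕ} (hp0 : p ≠ 0) (hq0 : q ≠ 0)
    {r : Fin a → ℕ} (hr : ∀ j, r j ≠ 0) {r' : Fin b → ℕ} (hr' : ∀ j, r' j ≠ 0)
    {i₀ iL : Fin a} {j₀ jL : Fin b}
    (hi : i₀ ≠ iL) (hj : j₀ ≠ jL) (V : Set (Sph a × Sph b))
    (θ : Sph a × Sph b → ℂ) (hθ : Continuous θ) (i : Fin a) (j : Fin b)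
    (h1 : ∀ v ∈ V, co q r i₀ iL (θ v ^ p) v.1 i ≠ 0)
    (h2 : ∀ v ∈ V, co p r' j₀ jL (θ v ^ q) v.2 j ≠ 0) (c₁ : Sph a) (c₂ : Sph b) :
    Homotopic ((ContinuousMap.id (Sph a × Sph b)).restrict V) (ContinuousMap.const V (c₁, c₂)) := by
  refine null_prod _ _ _ ?_ ?_
  · exact null_co ha hq0 hr hi _ (fun y => θ y.1 ^ p) (by fun_prop) i
      (fun y => h1 y.1 y.2) _
  · exact null_co hb hp0 hr' hj _ (fun y => θ y.1 ^ q) (by fun_prop) j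
      (fun y => h2 y.1 y.2) _

set_option maxHeartbeats 4000000 in
lemma main (a b : ℕ) (ha : 2 ≤ a) (hb : 2 ≤ b) (p q : ℕ) (hp2 : 2 ≤ p) (hq2 : 2 ≤ q)
    (hpq : Nat.Coprime p q)
    (ℓ : Fin a → ℤ) (hℓ : ∀ j, IsCoprime (ℓ j) (p : ℤ))
    (ℓ' : Fin b → ℤ) (hℓ' : ∀ j, IsCoprime (ℓ' j) (q : ℤ)) :
    lsCat (LensSpace p a ℓ × LensSpace q b ℓ') ≤ 2 * (a + b - 2) := by
  have hp0 : p ≠ 0 := by omega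
  have hq0 : q ≠ 0 := by omega
  have hn2 : 2 ≤ p * q := by nlinarith
  have hn0 : p * q ≠ 0 := by omega
  let i₀ : Fin a := ⟨0, by omega⟩
  let iL : Fin a := ⟨a - 1, by omega⟩
  let j₀ : Fin b := ⟨0, by omega⟩
  let jL : Fin b := ⟨b - 1, by omega⟩
  have hi : i₀ ≠ iL := by simp only [i₀, iL, ne_eq, Fin.mk.injEq]; omega
  have hj : j₀ ≠ jL := by simp only [j₀, jL, ne_eq, Fin.mk.injEq]; omega
  obtain ⟨e, r, hr, hr0, her, hrel⟩ := lens_data p a hp2 ℓ hℓ i₀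
  obtain ⟨e', r', hr', hr0', her', hrel'⟩ := lens_data q b hq2 ℓ' hℓ' j₀
  let θ : (Sph a × Sph b) → ℂ := fun y => (y.1.1 iL ^ r iL) ^ q * (y.2.1 jL ^ r' jL) ^ p
  have hθ : Continuous θ := by fun_prop
  let A : Fin a → (Sph a × Sph b) → ℂ := fun i y => co q r i₀ iL (θ y ^ p) y.1 i
  let B : Fin b → (Sph a × Sph b) → ℂ := fun j y => co p r' j₀ jL (θ y ^ q) y.2 j
  have hA : ∀ i, Continuous (A i) := fun i =>
    co_cont q r i₀ iL i _ (hθ.pow p) _ continuous_fst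
  have hB : ∀ j, Continuous (B j) := fun j =>
    co_cont p r' j₀ jL j _ (hθ.pow q) _ continuous_snd
  let Φ : Fin a × Fin b → (Sph a × Sph b) → ℂ := fun ij y => A ij.1 y * B ij.2 y
  have hΦ : ∀ ij, Continuous (Φ ij) := fun ij => (hA _).mul (hB _)
  -- the group action
  let R : ℂ → ℂ → (Sph a × Sph b) → (Sph a × Sph b) → Prop := fun s t y y' => s ^ p = 1 ∧ t ^ q = 1 ∧
    (∀ j, y'.1.1 j = s ^ (e j) * y.1.1 j) ∧ ∀ j, y'.2.1 j = t ^ (e' j) * y.2.1 j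
  have Rθ : ∀ s t y y', R s t y y' → θ y' = s ^ q * t ^ p * θ y := by
    rintro s t y y' ⟨hs, ht, h1, h2⟩
    simp only [θ]
    rw [h1, h2, mul_pow, mul_pow _ _ (r' jL), her s hs, her' t ht]
    ring
  have Rθn : ∀ s t y y', R s t y y' → θ y' ^ (p * q) = θ y ^ (p * q) := by
    intro s t y y' h
    rw [Rθ s t y y' h, mul_pow, mul_pow]
    have h1 : (s ^ q) ^ (p * q) = 1 := by
      rw [← pow_mul, mul_left_comm, pow_mul, h.1, one_pow]
    have h2 : (t ^ p) ^ (p * q) = 1 := by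
      rw [← pow_mul, mul_comm p q, mul_left_comm, pow_mul, h.2.1, one_pow]
    rw [h1, h2, one_mul, one_mul]
  have RΦ : ∀ s t y y', R s t y y' → ∀ ij, Φ ij y' = s ^ q * t ^ p * Φ ij y := by
    intro s t y y' h ij
    have h1 : A ij.1 y' = s ^ q * A ij.1 y := co_rot hr0 (her s h.1)
      (by rw [← pow_mul, ← pow_mul]; exact Rθn s t y y' h) h.2.2.1 _
    have h2 : B ij.2 y' = t ^ p * B ij.2 y := co_rot hr0' (her' t h.2.1)
      (by rw [← pow_mul, ← pow_mul, mul_comm q p]; exact Rθn s t y y' h) h.2.2.2 _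
    simp only [Φ]
    rw [h1, h2]; ring
  have Rnorm : ∀ s t y y', R s t y y' → ‖s ^ q * t ^ p‖ = 1 := by
    intro s t y y' h
    rw [norm_mul, norm_pow, norm_pow, norm_one_of_pow hp2 h.1, norm_one_of_pow hq2 h.2.1]
    simp
  have Rroot : ∀ s t y y', R s t y y' → (s ^ q * t ^ p) ^ (p * q) = 1 := by
    intro s t y y' h
    have h1 : (s ^ q) ^ (p * q) = 1 := by
      rw [← pow_mul, mul_left_comm, pow_mul, h.1, one_pow]
    have h2 : (t ^ p) ^ (p * q) = 1 := by
      rw [← pow_mul, mul_comm p q, mul_left_comm, pow_mul, h.2.1, one_pow]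
    rw [mul_pow, h1, h2, one_mul]
  have RΦn : ∀ s t y y', R s t y y' → ∀ ij, ‖Φ ij y'‖ = ‖Φ ij y‖ := by
    intro s t y y' h ij
    rw [RΦ s t y y' h, norm_mul, Rnorm s t y y' h, one_mul]
  have Rtriv : ∀ s t y y', R s t y y' → s ^ q * t ^ p = 1 → y = y' := by
    intro s t y y' h h1
    obtain ⟨rfl, rfl⟩ := chi_inj hpq h.1 h.2.1 h1
    apply Prod.ext
    · apply Subtype.ext; ext j; rw [h.2.2.1 j]; simp
    · apply Subtype.ext; ext j; rw [h.2.2.2 j]; simp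
  have Rex : ∀ η : ℂ, η ^ (p * q) = 1 → ∀ y, ∃ s t y', R s t y y' ∧ s ^ q * t ^ p = η := by
    intro η hη y
    obtain ⟨s, t, hs, ht, h⟩ := chi_surj hp2 hq2 hpq hη
    refine ⟨s, t, (rot e s (norm_one_of_pow hp2 hs) y.1, rot e' t (norm_one_of_pow hq2 ht) y.2),
      ⟨hs, ht, fun j => by simp [rot], fun j => by simp [rot]⟩, h⟩
  -- the quotient map
  let π : C((Sph a × Sph b), LensSpace p a ℓ × LensSpace q b ℓ') := (mk p a ℓ).prodMap (mk q b ℓ')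
  have hπo : IsOpenMap π := (mk_open hp2 hrel).prodMap (mk_open hq2 hrel')
  have hπ : ∀ y y', π y = π y' ↔ ∃ s t, R s t y y' := by
    intro y y'
    have h1 := mk_eq_iff hp2 hrel y.1 y'.1
    have h2 := mk_eq_iff hq2 hrel' y.2 y'.2
    have h3 : π y = π y' ↔ (Quot.mk (lensRel p a ℓ) y.1 = Quot.mk (lensRel p a ℓ) y'.1 ∧
      Quot.mk (lensRel q b ℓ') y.2 = Quot.mk (lensRel q b ℓ') y'.2) := Prod.ext_iff
    rw [h3, h1, h2]
    constructor
    · rintro ⟨⟨s, hs, h⟩, ⟨t, ht, h'⟩⟩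
      exact ⟨s, t, hs, ht, h, h'⟩
    · rintro ⟨s, t, hs, ht, h, h'⟩
      exact ⟨⟨s, hs, h⟩, ⟨t, ht, h'⟩⟩
  have hπs : Function.Surjective π := by
    rintro ⟨x, x'⟩
    obtain ⟨y, rfl⟩ := Quot.exists_rep x
    obtain ⟨y', rfl⟩ := Quot.exists_rep x'
    exact ⟨(y, y'), rfl⟩
  -- base point
  let c₁ : Sph a := ⟨EuclideanSpace.single i₀ 1, by simp⟩
  let c₂ : Sph b := ⟨EuclideanSpace.single j₀ 1, by simp⟩
  -- the sectors
  obtain ⟨κ₀, hκ₀⟩ := IsAlgClosed.exists_pow_nat_eq (-1 : ℂ) (n := p * q) (by omega)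
  let κ : Bool → ℂ := fun ε => if ε then 1 else κ₀
  -- the function on the last stratum
  obtain ⟨α, β, hαβ⟩ := (Nat.isCoprime_iff_coprime.2 hpq : IsCoprime (p : ℤ) (q : ℤ))
  let ρ : (Sph a × Sph b) → ℂ := fun y => y.1.1 i₀ / y.1.1 iL ^ r iL
  let σ : (Sph a × Sph b) → ℂ := fun y => y.2.1 j₀ / y.2.1 jL ^ r' jL
  let u : (Sph a × Sph b) → ℂ := fun y => θ y * ρ y ^ (-α) * σ y ^ (-β)
  let O : Set (Sph a × Sph b) := {y | (y.1.1 i₀ ≠ 0 ∧ y.1.1 iL ≠ 0) ∧ (y.2.1 j₀ ≠ 0 ∧ y.2.1 jL ≠ 0)}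
  have hO : IsOpen O := by
    have h1 : ∀ i, IsOpen {y : (Sph a × Sph b) | y.1.1 i ≠ 0} := fun i =>
      isOpen_ne_fun (by fun_prop) continuous_const
    have h2 : ∀ i, IsOpen {y : (Sph a × Sph b) | y.2.1 i ≠ 0} := fun i =>
      isOpen_ne_fun (by fun_prop) continuous_const
    exact ((h1 _).inter (h1 _)).inter ((h2 _).inter (h2 _))
  have hu : ContinuousOn u O := by
    have hρ : ContinuousOn ρ O := by
      apply ContinuousOn.div
      · fun_prop
      · fun_prop
      · intro y hy; exact pow_ne_zero _ hy.1.2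
    have hσ : ContinuousOn σ O := by
      apply ContinuousOn.div
      · fun_prop
      · fun_prop
      · intro y hy; exact pow_ne_zero _ hy.2.2
    refine (hθ.continuousOn.mul (hρ.zpow₀ _ ?_)).mul (hσ.zpow₀ _ ?_)
    · intro y hy; left; exact div_ne_zero hy.1.1 (pow_ne_zero _ hy.1.2)
    · intro y hy; left; exact div_ne_zero hy.2.1 (pow_ne_zero _ hy.2.2)
  have Ru : ∀ s t y y', R s t y y' → u y' = s ^ q * t ^ p * u y := by
    intro s t y y' h
    have hs0 : s ≠ 0 := fun h' => by have := h.1; rw [h', zero_pow hp0] at this; simp at this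
    have ht0 : t ≠ 0 := fun h' => by have := h.2.1; rw [h', zero_pow hq0] at this; simp at this
    have he0 : s ^ (e i₀) = s := by have := her s h.1 i₀; rwa [hr0, pow_one] at this
    have he0' : t ^ (e' j₀) = t := by have := her' t h.2.1 j₀; rwa [hr0', pow_one] at this
    have h1 : ρ y' = ρ y := by
      simp only [ρ]
      rw [h.2.2.1, h.2.2.1, mul_pow, her s h.1, he0, mul_div_mul_left _ _ hs0]
    have h2 : σ y' = σ y := by
      simp only [σ]
      rw [h.2.2.2, h.2.2.2, mul_pow, her' t h.2.1, he0', mul_div_mul_left _ _ ht0]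
    simp only [u]
    rw [h1, h2, Rθ s t y y' h]; ring
  have RO : ∀ s t y y', R s t y y' → y ∈ O → y' ∈ O := by
    intro s t y y' h hy
    have hs0 : s ≠ 0 := fun h' => by have := h.1; rw [h', zero_pow hp0] at this; simp at this
    have ht0 : t ≠ 0 := fun h' => by have := h.2.1; rw [h', zero_pow hq0] at this; simp at this
    refine ⟨⟨?_, ?_⟩, ⟨?_, ?_⟩⟩
    · rw [h.2.2.1]; exact mul_ne_zero (pow_ne_zero _ hs0) hy.1.1
    · rw [h.2.2.1]; exact mul_ne_zero (pow_ne_zero _ hs0) hy.1.2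
    · rw [h.2.2.2]; exact mul_ne_zero (pow_ne_zero _ ht0) hy.2.1
    · rw [h.2.2.2]; exact mul_ne_zero (pow_ne_zero _ ht0) hy.2.2
  -- the sets
  let W : ℕ → ℂ → Fin a × Fin b → Set (Sph a × Sph b) := fun k κ ij =>
    {y | (ij.1 : ℕ) + ij.2 = k ∧ κ * Φ ij y ∈ sector (p * q) ∧
      ∀ ij' : Fin a × Fin b, (ij'.1 : ℕ) + ij'.2 = k → ij' ≠ ij → ‖Φ ij' y‖ < ‖Φ ij y‖}
  have hW : ∀ k κ ij, IsOpen (W k κ ij) := by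
    intro k κ ij
    refine IsOpen.inter isOpen_const (IsOpen.inter ?_ ?_)
    · exact (sector_open _).preimage (continuous_const.mul (hΦ ij))
    · have : {y : (Sph a × Sph b) | ∀ ij' : Fin a × Fin b, (ij'.1 : ℕ) + ij'.2 = k → ij' ≠ ij →
          ‖Φ ij' y‖ < ‖Φ ij y‖} = ⋂ ij' : Fin a × Fin b, {y : (Sph a × Sph b) | (ij'.1 : ℕ) + ij'.2 = k →
            ij' ≠ ij → ‖Φ ij' y‖ < ‖Φ ij y‖} := by ext; simp
      change IsOpen {y : (Sph a × Sph b) | ∀ ij' : Fin a × Fin b, (ij'.1 : ℕ) + ij'.2 = k → ij' ≠ ij →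
          ‖Φ ij' y‖ < ‖Φ ij y‖}
      rw [this]
      refine isOpen_iInter_of_finite fun ij' => ?_
      by_cases h1 : (ij'.1 : ℕ) + ij'.2 = k
      · by_cases h2 : ij' ≠ ij
        · simp only [h1, h2, forall_const, ne_eq, not_false_eq_true]
          exact isOpen_lt (hΦ _).norm (hΦ _).norm
        · simp [h2]
      · simp [h1]
  have hWd : ∀ k κ ij ij' y y' s t, R s t y y' → y ∈ W k κ ij → y' ∈ W k κ ij' → ij = ij' := by
    intro k κ ij ij' y y' s t h hy hy'
    by_contra hne
    have h1 := hy.2.2 ij' hy'.1 (Ne.symm hne)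
    have h2 := hy'.2.2 ij hy.1 hne
    rw [RΦn s t y y' h, RΦn s t y y' h] at h2
    exact lt_asymm h1 h2
  have Rone : ∀ y, R 1 1 y y := fun y => ⟨by simp, by simp, by simp, by simp⟩
  let VV : Option (Fin (a + b - 2) × Bool) → Set (Sph a × Sph b) := fun o => match o with
    | none => O ∩ u ⁻¹' sector (p * q)
    | some kε => ⋃ ij, W kε.1 (κ kε.2) ij
  have hVo : ∀ o, IsOpen (VV o) := by
    rintro (_ | kε)
    · exact hu.isOpen_inter_preimage hO (sector_open _)
    · exact isOpen_iUnion fun ij => hW _ _ _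
  have hVi : ∀ o, Set.InjOn π (VV o) := by
    rintro (_ | kε) y hy y' hy' hyy'
    · obtain ⟨s, t, h⟩ := (hπ y y').1 hyy'
      apply Rtriv s t y y' h
      refine sector_inj hn0 (c := u y) hy.2 ?_ (Rroot s t y y' h)
      rw [← Ru s t y y' h]; exact hy'.2
    · obtain ⟨s, t, h⟩ := (hπ y y').1 hyy'
      obtain ⟨ij, hy⟩ := Set.mem_iUnion.1 hy
      obtain ⟨ij', hy'⟩ := Set.mem_iUnion.1 hy'
      obtain rfl := hWd _ _ _ _ _ _ s t h hy hy'
      apply Rtriv s t y y' h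
      refine sector_inj hn0 (c := κ kε.2 * Φ ij y) hy.2.1 ?_ (Rroot s t y y' h)
      rw [mul_left_comm, ← RΦ s t y y' h]; exact hy'.2.1
  have hVn : ∀ o, ((ContinuousMap.id (Sph a × Sph b)).restrict (VV o)).Nullhomotopic := by
    rintro (_ | kε)
    · exact ⟨(c₁, c₂), null_none ha hb hi hj _ (fun v hv => hv.1.1.2) (fun v hv => hv.1.2.2) _ _⟩
    · refine ⟨(c₁, c₂), null_glue _ _ _ (fun ij => hW _ _ ij) ?_ ?_⟩
      · intro ij ij' y hy hy'
        exact hWd _ _ _ _ y y 1 1 (Rone y) hy hy'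
      · intro ij
        have hne : ∀ y : W kε.1 (κ kε.2) ij, Φ ij y.1 ≠ 0 := fun y h => by
          have := sector_ne_zero y.2.2.1
          rw [h, mul_zero] at this
          exact this rfl
        exact null_some ha hb hp0 hq0 hr hr' hi hj _ θ hθ ij.1 ij.2
          (fun y hy => left_ne_zero_of_mul (hne ⟨y, hy⟩))
          (fun y hy => right_ne_zero_of_mul (hne ⟨y, hy⟩)) _ _
  have hVc : ∀ y, ∃ o, ∃ y' ∈ VV o, π y' = π y := by
    intro y
    have exA : ∃ i, A i y ≠ 0 := co_exists hq0 hr hi _ _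
    have exB : ∃ j, B j y ≠ 0 := co_exists hp0 hr' hj _ _
    obtain ⟨i, hiA, himin⟩ := WellFounded.has_min (wellFounded_lt (α := Fin a)) {i | A i y ≠ 0} exA
    obtain ⟨j, hjB, hjmin⟩ := WellFounded.has_min (wellFounded_lt (α := Fin b)) {j | B j y ≠ 0} exB
    have hA0 : ∀ i' < i, A i' y = 0 := fun i' h => by
      by_contra hne; exact himin i' hne h
    have hB0 : ∀ j' < j, B j' y = 0 := fun j' h => by
      by_contra hne; exact hjmin j' hne h
    by_cases hk : (i : ℕ) + j < a + b - 2
    · have hc0 : Φ (i, j) y ≠ 0 := mul_ne_zero hiA hjB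
      have hε : ∃ ε, (κ ε * Φ (i, j) y) ^ (p * q) ∈ Complex.slitPlane := by
        have hcn := pow_ne_zero (p * q) hc0
        rcases Complex.mem_slitPlane_or_neg_mem_slitPlane hcn with h | h
        · exact ⟨true, by simpa [κ] using h⟩
        · exact ⟨false, by simpa [κ, mul_pow, hκ₀] using h⟩
      obtain ⟨ε, hε⟩ := hε
      obtain ⟨η, hη, hs⟩ := sector_cover hn2 hε
      obtain ⟨s, t, y', h, hst⟩ := Rex η hη y
      refine ⟨some (⟨i + j, hk⟩, ε), y', ?_, ((hπ y y').2 ⟨s, t, h⟩).symm⟩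
      refine Set.mem_iUnion.2 ⟨(i, j), rfl, ?_, ?_⟩
      · rw [RΦ s t y y' h, hst, mul_left_comm]; exact hs
      · intro ij' hsum hne
        rw [RΦn s t y y' h, RΦn s t y y' h]
        have hz : Φ ij' y = 0 := by
          rcases lt_trichotomy ij'.1 i with h1 | h1 | h1
          · simp only [Φ]; rw [hA0 _ h1, zero_mul]
          · exfalso
            apply hne
            apply Prod.ext h1
            apply Fin.ext
            have := congrArg Fin.val h1
            simp only at hsum ⊢
            omega
          · have h2 : ij'.2 < j := by
              rw [Fin.lt_def] at h1 ⊢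
              simp only at hsum
              omega
            simp only [Φ]; rw [hB0 _ h2, mul_zero]
        rw [hz, norm_zero]
        exact norm_pos_iff.2 hc0
    · have hiL : i = iL := by apply Fin.ext; simp only [iL]; omega
      have hjL : j = jL := by apply Fin.ext; simp only [jL]; omega
      subst hiL hjL
      have hlt : i₀ < iL := by rw [Fin.lt_def]; simp only [i₀, iL]; omega
      have hlt' : j₀ < jL := by rw [Fin.lt_def]; simp only [j₀, jL]; omega
      have hzL : y.1.1 iL ^ r iL ≠ 0 := by
        have h : A iL y ≠ 0 := hiA
        simp only [A, co, if_neg hi.symm] at h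
        exact fun h' => h (by rw [h', zero_pow hq0])
      have hwL : y.2.1 jL ^ r' jL ≠ 0 := by
        have h : B jL y ≠ 0 := hjB
        simp only [B, co, if_neg hj.symm] at h
        exact fun h' => h (by rw [h', zero_pow hp0])
      have hθ0 : θ y ≠ 0 := mul_ne_zero (pow_ne_zero _ hzL) (pow_ne_zero _ hwL)
      have hz0 : y.1.1 i₀ ^ q = (y.1.1 iL ^ r iL * θ y ^ p) ^ q := by
        have h : A i₀ y = 0 := hA0 _ hlt
        simp only [A, co, if_true] at h
        exact sub_eq_zero.1 h
      have hw0 : y.2.1 j₀ ^ p = (y.2.1 jL ^ r' jL * θ y ^ q) ^ p := by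
        have h : B j₀ y = 0 := hB0 _ hlt'
        simp only [B, co, if_true] at h
        exact sub_eq_zero.1 h
      have hyO : y ∈ O := by
        refine ⟨⟨fun h => ?_, fun h => hzL (by rw [h, zero_pow (hr _)])⟩,
          ⟨fun h => ?_, fun h => hwL (by rw [h, zero_pow (hr' _)])⟩⟩
        · rw [h, zero_pow hq0] at hz0
          exact pow_ne_zero _ (mul_ne_zero hzL (pow_ne_zero _ hθ0)) hz0.symm
        · rw [h, zero_pow hp0] at hw0
          exact pow_ne_zero _ (mul_ne_zero hwL (pow_ne_zero _ hθ0)) hw0.symm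
      have hρ : ρ y ^ q = θ y ^ (p * q) := by
        simp only [ρ]
        rw [div_pow, hz0, mul_pow, mul_div_cancel_left₀ _ (pow_ne_zero _ hzL), ← pow_mul]
      have hσ : σ y ^ p = θ y ^ (p * q) := by
        simp only [σ]
        rw [div_pow, hw0, mul_pow, mul_div_cancel_left₀ _ (pow_ne_zero _ hwL), ← pow_mul,
          mul_comm q p]
      have hun : u y ^ (p * q) = 1 := by
        have h1 : (ρ y ^ (-α)) ^ (p * q) = θ y ^ ((p * q : ℤ) * (-α * p)) := by
          rw [zpow_mul, ← Nat.cast_mul, zpow_natCast, ← hρ, ← zpow_natCast (ρ y ^ (-α)),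
            ← zpow_natCast (ρ y), ← zpow_mul, ← zpow_mul]
          congr 1; push_cast; ring
        have h2 : (σ y ^ (-β)) ^ (p * q) = θ y ^ ((p * q : ℤ) * (-β * q)) := by
          rw [zpow_mul, ← Nat.cast_mul, zpow_natCast, ← hσ, ← zpow_natCast (σ y ^ (-β)),
            ← zpow_natCast (σ y), ← zpow_mul, ← zpow_mul]
          congr 1; push_cast; ring
        simp only [u]
        rw [mul_pow, mul_pow, h1, h2, ← zpow_natCast (θ y), ← zpow_add₀ hθ0, ← zpow_add₀ hθ0]
        have : ((p * q : ℕ) : ℤ) + (p * q : ℤ) * (-α * p) + (p * q : ℤ) * (-β * q) = 0 := by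
          push_cast
          linear_combination (-(p * q : ℤ)) * hαβ
        rw [this, zpow_zero]
      obtain ⟨η, hη, hs⟩ := sector_cover hn2 (c := u y) (by rw [hun]; exact Complex.one_mem_slitPlane)
      obtain ⟨s, t, y', h, hst⟩ := Rex η hη y
      refine ⟨none, y', ⟨RO s t y y' h hyO, ?_⟩, ((hπ y y').2 ⟨s, t, h⟩).symm⟩
      change u y' ∈ sector (p * q)
      rw [Ru s t y y' h, hst]; exact hs
  refine lsCat_le (ι := Option (Fin (a + b - 2) × Bool)) _ (by simp; ring) (fun o => π '' VV o)
    (fun o => (null_image π hπo _ (hVo o) (hVi o) (hVn o)).1) ?_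
    (fun o => (null_image π hπo _ (hVo o) (hVi o) (hVn o)).2)
  intro x
  obtain ⟨y, rfl⟩ := hπs x
  obtain ⟨o, y', hy', h⟩ := hVc y
  exact ⟨o, y', hy', h⟩

end LensProof

/-- For odd `m, n > 2` and relatively prime `p, q ≥ 2` with both `p, q` odd, or `p` odd and
`q` even with `n = 2k-1` for even `k`: `cat (L^m_p × L^n_q) ≤ m + n - 2`. -/
theorem lsCat_prod_lensSpace_le_spin (a b : ℕ) (ha : 2 ≤ a) (hb : 2 ≤ b)
    (m n : ℕ) (hm : m = 2 * a - 1) (hn : n = 2 * b - 1)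
    (p q : ℕ) (hp2 : 2 ≤ p) (hq2 : 2 ≤ q) (hpq : Nat.Coprime p q)
    (hparity : (Odd p ∧ Odd q) ∨ (Odd p ∧ Even q ∧ Even b))
    (ℓ : Fin a → ℤ) (hℓ : ∀ j, IsCoprime (ℓ j) (p : ℤ))
    (ℓ' : Fin b → ℤ) (hℓ' : ∀ j, IsCoprime (ℓ' j) (q : ℤ)) :
    lsCat (LensSpace p a ℓ × LensSpace q b ℓ') ≤ m + n - 2 := by
  have h := LensProof.main a b ha hb p q hp2 hq2 hpq ℓ hℓ ℓ' hℓ'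
  omega
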